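/- arXiv:2311.17840 — 3 statements merged into one kernel-verified Lean document; each statement's English description precedes it below -/
import Mathlib

section
/- For positive dissimilarities d_{ij} (i ≠ j in {1,…,n}) and an integer m ≥ 1, define OPT_m = inf over x_1,…,x_n ∈ ℝ^m of (1/n²)·Σ_{i ≠ j} (1 − ‖x_i − x_j‖/d_{ij})². There is an absolute constant C such that for every n, every family of positive dissimilarities d_{ij}, every ε ∈ (0,1), and every integer k ≥ 1: OPT_{⌈1/ε⌉} ≤ OPT_k + C·ε. -/
open Finset in
lemma aux_cons {Ω : Type} [Fintype Ω] (m : ℕ) (F : (Fin (m+1) → Ω) → ℝ) :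
    ∑ w, F w = ∑ a : Ω, ∑ v : Fin m → Ω, F (Fin.cons a v) := by
  rw [← Fintype.sum_prod_type']
  exact (Fintype.sum_equiv (Fin.consEquiv (fun _ : Fin (m+1) => Ω)) _ _ (fun x => rfl)).symm

lemma aux_card {Ω : Type} [Fintype Ω] (m : ℕ) (c : ℝ) :
    ∑ _v : Fin m → Ω, c = (Fintype.card Ω : ℝ) ^ m * c := by
  simp

/-- Moments of sums of independent copies. -/
lemma aux_iid {Ω : Type} [Fintype Ω] (f : Ω → ℝ) (A : ℝ)
    (h1 : ∑ w, f w = Fintype.card Ω * A) (h2 : ∑ w, f w ^ 2 ≤ Fintype.card Ω * (3 * A ^ 2)) (m : ℕ) :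
    (∑ w : Fin m → Ω, ∑ a, f (w a) = (Fintype.card Ω : ℝ) ^ m * (m * A)) ∧
    (∑ w : Fin m → Ω, (∑ a, f (w a)) ^ 2 ≤ (Fintype.card Ω : ℝ) ^ m * ((m ^ 2 + 2 * m) * A ^ 2)) := by
  induction m with
  | zero => simp
  | succ m ih =>
    obtain ⟨i1, i2⟩ := ih
    constructor
    · rw [aux_cons]
      simp only [Fin.sum_univ_succ, Fin.cons_zero, Fin.cons_succ, Finset.sum_add_distrib, i1, aux_card,
        ← Finset.mul_sum, h1]
      simp
      ring
    · rw [aux_cons]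
      simp only [Fin.sum_univ_succ, Fin.cons_zero, Fin.cons_succ, add_sq, Finset.sum_add_distrib,
        aux_card, ← Finset.mul_sum, i1, ← Finset.sum_mul, h1]
      have hc : (0:ℝ) ≤ Fintype.card Ω := by positivity
      have e1 := mul_le_mul_of_nonneg_left h2 (pow_nonneg hc m)
      have e2 := mul_le_mul_of_nonneg_left i2 hc
      simp only [Finset.sum_const, Finset.card_univ, nsmul_eq_mul]
      push_cast
      refine (add_le_add (add_le_add e1 le_rfl) e2).trans (le_of_eq ?_)
      ring

def auxS (b : Bool) : ℝ := if b then 1 else -1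

/-- Second and fourth moments of Rademacher sums. -/
lemma aux_rad (k : ℕ) (u : Fin k → ℝ) :
    (∑ s : Fin k → Bool, (∑ b, auxS (s b) * u b) ^ 2 = (2 : ℝ) ^ k * ∑ b, u b ^ 2) ∧
    (∑ s : Fin k → Bool, ((∑ b, auxS (s b) * u b) ^ 2) ^ 2
      ≤ (2 : ℝ) ^ k * (3 * (∑ b, u b ^ 2) ^ 2)) := by
  induction k with
  | zero => simp
  | succ k ih =>
    obtain ⟨i1, i2⟩ := ih (fun b => u b.succ)
    constructor
    · rw [aux_cons]
      simp only [Fin.sum_univ_succ, Fin.cons_zero, Fin.cons_succ, Fintype.sum_bool, auxS, if_true,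
        Bool.false_eq_true, if_false]
      simp only [auxS] at i1
      rw [← Finset.sum_add_distrib]
      have : ∀ z : ℝ, (1 * u 0 + z) ^ 2 + (-1 * u 0 + z) ^ 2 = 2 * u 0 ^ 2 + 2 * z ^ 2 := by
        intro z; ring
      simp only [this, Finset.sum_add_distrib, ← Finset.mul_sum, i1, aux_card]
      simp
      ring
    · rw [aux_cons]
      simp only [Fin.sum_univ_succ, Fin.cons_zero, Fin.cons_succ, Fintype.sum_bool, auxS, if_true,
        Bool.false_eq_true, if_false]
      simp only [auxS] at i1 i2
      rw [← Finset.sum_add_distrib]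
      have : ∀ z : ℝ, ((1 * u 0 + z) ^ 2) ^ 2 + ((-1 * u 0 + z) ^ 2) ^ 2
          = 2 * u 0 ^ 4 + 12 * u 0 ^ 2 * z ^ 2 + 2 * (z ^ 2) ^ 2 := by
        intro z; ring
      simp only [this, Finset.sum_add_distrib, ← Finset.mul_sum, i1, aux_card]
      simp only [Fintype.card_bool, Nat.cast_ofNat]
      have h0 : (0:ℝ) ≤ 2 ^ k * u 0 ^ 4 := by positivity
      rw [pow_succ (2:ℝ) k]
      nlinarith [i2, h0]

noncomputable def auxP {m k : ℕ} (w : Fin m → Fin k → Bool) (x : EuclideanSpace ℝ (Fin k)) :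
    EuclideanSpace ℝ (Fin m) :=
  WithLp.toLp 2 (fun a => (1 / √(m : ℝ)) * ∑ b, auxS (w a b) * x b)

lemma auxP_sub {m k : ℕ} (w : Fin m → Fin k → Bool) (x y : EuclideanSpace ℝ (Fin k)) :
    auxP w x - auxP w y = auxP w (x - y) := by
  ext a
  simp [auxP, mul_sub, Finset.sum_sub_distrib]

lemma auxP_norm {m k : ℕ} (w : Fin m → Fin k → Bool) (x : EuclideanSpace ℝ (Fin k)) :
    ‖auxP w x‖ ^ 2 = (1 / (m:ℝ)) * ∑ a, (∑ b, auxS (w a b) * x b) ^ 2 := by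
  rw [EuclideanSpace.real_norm_sq_eq]
  simp [auxP, mul_pow, ← Finset.mul_sum]

lemma aux_mom {m k : ℕ} (hm : 0 < m) (x : EuclideanSpace ℝ (Fin k)) :
    (∑ w : Fin m → Fin k → Bool, ‖auxP w x‖ ^ 2 = ((2:ℝ) ^ k) ^ m * ‖x‖ ^ 2) ∧
    (∑ w : Fin m → Fin k → Bool, ‖auxP w x‖ ^ 4 ≤ ((2:ℝ) ^ k) ^ m * ((1 + 2 / m) * ‖x‖ ^ 4)) := by
  obtain ⟨r1, r2⟩ := aux_rad k x
  rw [← EuclideanSpace.real_norm_sq_eq] at r1 r2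
  have hc : (Fintype.card (Fin k → Bool) : ℝ) = 2 ^ k := by simp
  rw [← hc] at r1 r2
  obtain ⟨i1, i2⟩ := aux_iid _ _ r1 r2 m
  rw [hc] at i1 i2
  have hm' : (0:ℝ) < m := by exact_mod_cast hm
  constructor
  · simp only [auxP_norm, ← Finset.mul_sum, i1]
    field_simp
  · have : ∀ y : ℝ, y ^ 4 = (y ^ 2) ^ 2 := fun y => by ring
    simp only [this, auxP_norm, mul_pow _ _ 2, ← Finset.mul_sum]
    refine (mul_le_mul_of_nonneg_left i2 (by positivity)).trans (le_of_eq ?_)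
    field_simp

lemma aux_pair {m k : ℕ} (hm : 0 < m) (x : EuclideanSpace ℝ (Fin k)) (D : ℝ) (hD : 0 < D) :
    ∑ w : Fin m → Fin k → Bool, (1 - ‖auxP w x‖ / D) ^ 2
      ≤ ((2:ℝ) ^ k) ^ m * ((1 - ‖x‖ / D) ^ 2 + 2 / m * (‖x‖ / D)) := by
  obtain ⟨h2, h4⟩ := aux_mom hm x
  have hm' : (0:ℝ) < m := by exact_mod_cast hm
  have hcard : ∀ c : ℝ, ∑ _w : Fin m → Fin k → Bool, c = ((2:ℝ) ^ k) ^ m * c := by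
    intro c; rw [aux_card]; simp
  rcases eq_or_lt_of_le (norm_nonneg x) with hN | hN
  · rw [← hN] at h2 ⊢
    calc _ ≤ ∑ w : Fin m → Fin k → Bool, (1 + 1 / D ^ 2 * ‖auxP w x‖ ^ 2) := by
          refine Finset.sum_le_sum fun w _ => ?_
          have : 0 ≤ ‖auxP w x‖ / D := by positivity
          have e : 1 / D ^ 2 * ‖auxP w x‖ ^ 2 = (‖auxP w x‖ / D) ^ 2 := by field_simp
          rw [e]; nlinarith
      _ ≤ _ := by
          rw [Finset.sum_add_distrib, ← Finset.mul_sum, h2, hcard]; simp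
  · set N := ‖x‖
    calc _ ≤ ∑ w : Fin m → Fin k → Bool, (1 + (1 / D ^ 2 - 3 / (D * N)) * ‖auxP w x‖ ^ 2
              + 1 / (D * N ^ 3) * ‖auxP w x‖ ^ 4) := by
          refine Finset.sum_le_sum fun w _ => ?_
          have hy := norm_nonneg (auxP w x)
          generalize ‖auxP w x‖ = y at hy
          have key : 0 ≤ (1 / (D * N ^ 3)) * (y * ((y - N) ^ 2 * (y + 2 * N))) := by positivity
          have e : (1 + (1 / D ^ 2 - 3 / (D * N)) * y ^ 2 + 1 / (D * N ^ 3) * y ^ 4) - (1 - y / D) ^ 2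
            = (1 / (D * N ^ 3)) * (y * ((y - N) ^ 2 * (y + 2 * N))) := by
            field_simp; ring
          linarith
      _ ≤ _ := by
          rw [Finset.sum_add_distrib, Finset.sum_add_distrib, ← Finset.mul_sum, ← Finset.mul_sum, h2,
            hcard]
          refine (add_le_add le_rfl (mul_le_mul_of_nonneg_left h4 (by positivity))).trans
            (le_of_eq ?_)
          field_simp
          ring


/-- Dimension reduction for Kamada–Kawai: with
`OPT_m = inf over embeddings into ℝ^m of the average cost`, there is an absolute constant `C`
such that `OPT_{⌈1/ε⌉} ≤ OPT_k + C·ε` for all instances, all `ε ∈ (0,1)` and all `k ≥ 1`. -/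
theorem stmt_8 :
    ∃ C : ℝ, ∀ (n : ℕ) (d : Fin n → Fin n → ℝ),
      (∀ i j, i ≠ j → 0 < d i j) →
      ∀ ε : ℝ, 0 < ε → ε < 1 → ∀ k : ℕ, 1 ≤ k →
      (⨅ x : Fin n → EuclideanSpace ℝ (Fin ⌈1 / ε⌉₊),
          (1 / (n : ℝ) ^ 2) *
            ∑ p ∈ Finset.univ.offDiag, (1 - ‖x p.1 - x p.2‖ / d p.1 p.2) ^ 2)
        ≤ (⨅ x : Fin n → EuclideanSpace ℝ (Fin k),
            (1 / (n : ℝ) ^ 2) *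
              ∑ p ∈ Finset.univ.offDiag, (1 - ‖x p.1 - x p.2‖ / d p.1 p.2) ^ 2) + C * ε := by
  refine ⟨4, fun n d hd ε hε hε1 k _ => ?_⟩
  set m := ⌈1 / ε⌉₊ with hmdef
  have hm : 0 < m := Nat.ceil_pos.mpr (by positivity)
  have hm' : (0:ℝ) < m := by exact_mod_cast hm
  have hmε : 1 / (m:ℝ) ≤ ε := by
    rw [div_le_comm₀ hm' hε]; exact Nat.le_ceil _
  have hbdd : BddBelow (Set.range fun x : Fin n → EuclideanSpace ℝ (Fin m) =>
      (1 / (n : ℝ) ^ 2) *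
        ∑ p ∈ Finset.univ.offDiag, (1 - ‖x p.1 - x p.2‖ / d p.1 p.2) ^ 2) :=
    ⟨0, by rintro _ ⟨x, rfl⟩; positivity⟩
  have hle := fun x => ciInf_le hbdd x
  set O := ⨅ x : Fin n → EuclideanSpace ℝ (Fin m), (1 / (n : ℝ) ^ 2) *
        ∑ p ∈ Finset.univ.offDiag, (1 - ‖x p.1 - x p.2‖ / d p.1 p.2) ^ 2
  rw [← sub_le_iff_le_add]
  refine le_ciInf fun x => ?_
  rw [sub_le_iff_le_add]
  have hn1 : (1 / (n : ℝ) ^ 2) * ((Finset.univ : Finset (Fin n)).offDiag.card : ℝ) ≤ 1 := by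
    have h : ((Finset.univ : Finset (Fin n)).offDiag.card : ℝ) ≤ (n:ℝ) ^ 2 := by
      have : (Finset.univ : Finset (Fin n)).offDiag.card ≤ n ^ 2 := by
        rw [Finset.offDiag_card]; simp [sq]
      exact_mod_cast this
    rw [one_div, inv_mul_eq_div]
    exact div_le_one_of_le₀ h (by positivity)
  have hO1 : O ≤ 1 := by
    refine (hle (fun _ => 0)).trans ?_
    simpa using hn1
  set c := (1 / (n : ℝ) ^ 2) *
        ∑ p ∈ Finset.univ.offDiag, (1 - ‖x p.1 - x p.2‖ / d p.1 p.2) ^ 2 with hc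
  rcases le_total 1 c with h | h
  · linarith
  set P := ((2:ℝ) ^ k) ^ m
  have hP : 0 < P := by positivity
  have hsum : P * O ≤ P * (c + 2 / m * ((1 / (n : ℝ) ^ 2) *
      ∑ p ∈ Finset.univ.offDiag, ‖x p.1 - x p.2‖ / d p.1 p.2)) := by
    calc P * O = ∑ _w : Fin m → Fin k → Bool, O := by rw [aux_card]; simp [P]
      _ ≤ ∑ w : Fin m → Fin k → Bool, (1 / (n : ℝ) ^ 2) *
          ∑ p ∈ Finset.univ.offDiag, (1 - ‖auxP w (x p.1 - x p.2)‖ / d p.1 p.2) ^ 2 := by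
        refine Finset.sum_le_sum fun w _ => ?_
        simpa only [auxP_sub] using hle (fun i => auxP w (x i))
      _ = (1 / (n : ℝ) ^ 2) * ∑ p ∈ Finset.univ.offDiag, ∑ w : Fin m → Fin k → Bool,
          (1 - ‖auxP w (x p.1 - x p.2)‖ / d p.1 p.2) ^ 2 := by
        rw [← Finset.mul_sum, Finset.sum_comm]
      _ ≤ (1 / (n : ℝ) ^ 2) * ∑ p ∈ Finset.univ.offDiag,
          P * ((1 - ‖x p.1 - x p.2‖ / d p.1 p.2) ^ 2 + 2 / m * (‖x p.1 - x p.2‖ / d p.1 p.2)) := by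
        refine mul_le_mul_of_nonneg_left (Finset.sum_le_sum fun p hp => ?_) (by positivity)
        exact aux_pair hm _ _ (hd _ _ (Finset.mem_offDiag.mp hp).2.2)
      _ = _ := by
        rw [← Finset.mul_sum, Finset.sum_add_distrib, ← Finset.mul_sum, hc]; ring
  have hO := le_of_mul_le_mul_left hsum hP
  have hr : (1 / (n : ℝ) ^ 2) * ∑ p ∈ Finset.univ.offDiag, ‖x p.1 - x p.2‖ / d p.1 p.2 ≤ 2 := by
    calc _ ≤ (1 / (n : ℝ) ^ 2) * ∑ p ∈ (Finset.univ : Finset (Fin n)).offDiag,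
          (3 / 2 + 1 / 2 * (1 - ‖x p.1 - x p.2‖ / d p.1 p.2) ^ 2) := by
          refine mul_le_mul_of_nonneg_left (Finset.sum_le_sum fun p _ => ?_) (by positivity)
          nlinarith [sq_nonneg (‖x p.1 - x p.2‖ / d p.1 p.2 - 2)]
      _ = 3 / 2 * ((1 / (n : ℝ) ^ 2) * ((Finset.univ : Finset (Fin n)).offDiag.card : ℝ))
          + 1 / 2 * c := by
          rw [Finset.sum_add_distrib, ← Finset.mul_sum, hc, Finset.sum_const, nsmul_eq_mul]; ring
      _ ≤ 2 := by linarith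
  have h2 := mul_le_mul_of_nonneg_left hr (show (0:ℝ) ≤ 2 / m by positivity)
  have h3 : (2:ℝ) / m = 2 * (1 / m) := by ring
  rw [h3] at h2 hO
  linarith
end

section
/- There is an absolute constant C such that the following holds. Let k, n ≥ 1 be integers and let μ be the probability measure on k×n real matrices under which the entries S_{ij} are independent Gaussians with mean 0 and variance 1/k. Then for every x ∈ ℝ^n, |∫ ‖S·x‖ dμ(S) − ‖x‖| ≤ (C/k)·‖x‖, where S·x ∈ ℝ^k is the matrix–vector product and ‖·‖ denotes the Euclidean norm. -/
open MeasureTheory ProbabilityTheory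
open scoped NNReal

lemma law_aux (n : ℕ) (v : ℝ≥0) (x : Fin n → ℝ) (c : ℝ) (hc : c ^ 2 = v * ∑ j, x j ^ 2) :
    (Measure.pi fun _ : Fin n => gaussianReal 0 v).map (fun w => ∑ j, w j * x j)
      = (gaussianReal 0 1).map (c * ·) := by
  have hm : Measurable (fun w : Fin n → ℝ => ∑ j, w j * x j) := by fun_prop
  have hL : ∀ j : Fin n, MemLp (fun y : ℝ => y * x j) 2 (gaussianReal 0 v) := fun j =>
    (memLp_id_gaussianReal' 2 (by simp)).mul_const (x j)
  have hI : iIndepFun (fun (j : Fin n) (w : Fin n → ℝ) => w j * x j)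
      (Measure.pi fun _ : Fin n => gaussianReal 0 v) :=
    iIndepFun_pi (X := fun j (y : ℝ) => y * x j) fun j => by fun_prop
  have hG : ∀ j : Fin n, HasGaussianLaw (fun w : Fin n → ℝ => w j * x j)
      (Measure.pi fun _ : Fin n => gaussianReal 0 v) := by
    intro j
    constructor
    have : (fun w : Fin n → ℝ => w j * x j) = (fun y : ℝ => y * x j) ∘ (fun w => w j) := rfl
    rw [this, ← Measure.map_map (by fun_prop) (by fun_prop),
      (measurePreserving_eval (fun _ : Fin n => gaussianReal 0 v) j).map_eq,
      gaussianReal_map_mul_const]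
    infer_instance
  have hS := (iIndepFun.hasGaussianLaw_fun_sum hG hI)
  have hS' := hS.isGaussian_map
  rw [gaussianReal_map_const_mul, hS'.eq_gaussianReal]
  have h1 : ((Measure.pi fun _ : Fin n => gaussianReal 0 v).map
      (fun w => ∑ j, w j * x j))[id] = 0 := by
    rw [integral_map hm.aemeasurable (by fun_prop)]
    simp only [id]
    rw [integral_finsetSum]
    · refine Finset.sum_eq_zero fun j _ => ?_
      rw [integral_comp_eval (μ := fun _ : Fin n => gaussianReal 0 v) (f := fun y : ℝ => y * x j) (by fun_prop), integral_mul_const,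
        integral_id_gaussianReal, zero_mul]
    · intro j _
      exact integrable_comp_eval (μ := fun _ : Fin n => gaussianReal 0 v) (f := fun y : ℝ => y * x j) ((hL j).integrable (by norm_num))
  have h2 : Var[id; (Measure.pi fun _ : Fin n => gaussianReal 0 v).map
      (fun w => ∑ j, w j * x j)] = c ^ 2 := by
    rw [variance_id_map hm.aemeasurable]
    have := variance_sum_pi hL
    have e : (∑ i, fun ω : Fin n → ℝ => ω i * x i) = fun w => ∑ j, w j * x j := by
      ext; simp
    rw [e] at this
    rw [this, hc, Finset.mul_sum]
    refine Finset.sum_congr rfl fun j _ => ?_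
    rw [variance_mul_const, variance_fun_id_gaussianReal]
  rw [h1, h2]
  congr 1
  · simp
  · ext; simp [sq_nonneg]

lemma sqrt_aux {Ω : Type*} [MeasurableSpace Ω] (P : Measure Ω) [IsProbabilityMeasure P]
    (Q : Ω → ℝ) (hQ : ∀ w, 0 ≤ Q w) (hL : MemLp Q 2 P) (s : ℝ) (hs : 0 < s)
    (hE : ∫ w, Q w ∂P = s ^ 2) :
    |∫ w, Real.sqrt (Q w) ∂P - s| ≤ Var[Q; P] / (2 * s ^ 3) := by
  have hi : Integrable Q P := hL.integrable (by norm_num)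
  have up : ∀ w, Real.sqrt (Q w) ≤ (Q w + s ^ 2) / (2 * s) := by
    intro w
    rw [le_div_iff₀ (by positivity)]
    nlinarith [Real.sq_sqrt (hQ w), sq_nonneg (Real.sqrt (Q w) - s)]
  have lo : ∀ w, (Q w + s ^ 2) / (2 * s) - (Q w - s ^ 2) ^ 2 / (2 * s ^ 3) ≤ Real.sqrt (Q w) := by
    intro w
    obtain ⟨t, ht⟩ : ∃ t, t = Real.sqrt (Q w) := ⟨_, rfl⟩
    have ht0 : 0 ≤ t := ht ▸ Real.sqrt_nonneg _
    have hq : Q w = t ^ 2 := by rw [ht, Real.sq_sqrt (hQ w)]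
    rw [← ht, hq, ← sub_nonneg]
    have : t - ((t ^ 2 + s ^ 2) / (2 * s) - (t ^ 2 - s ^ 2) ^ 2 / (2 * s ^ 3))
        = ((t - s) ^ 2 * (t ^ 2 + 2 * t * s)) / (2 * s ^ 3) := by
      field_simp
      ring
    rw [this]
    positivity
  have hiu : Integrable (fun w => (Q w + s ^ 2) / (2 * s)) P :=
    (hi.add (integrable_const _)).div_const _
  have hsub : MemLp (fun w => Q w - s ^ 2) 2 P := hL.sub (memLp_const _)
  have hiv : Integrable (fun w => (Q w - s ^ 2) ^ 2 / (2 * s ^ 3)) P :=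
    hsub.integrable_sq.div_const _
  have his : Integrable (fun w => Real.sqrt (Q w)) P := by
    refine hiu.mono' ?_ ?_
    · exact (Real.continuous_sqrt.comp_aestronglyMeasurable hL.1)
    · exact .of_forall fun w => by
        rw [Real.norm_of_nonneg (Real.sqrt_nonneg _)]; exact up w
  have eu : ∫ w, (Q w + s ^ 2) / (2 * s) ∂P = s := by
    rw [integral_div, integral_add hi (integrable_const _), hE]
    simp
    field_simp
    ring
  have ev : ∫ w, (Q w - s ^ 2) ^ 2 / (2 * s ^ 3) ∂P = Var[Q; P] / (2 * s ^ 3) := by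
    rw [integral_div, variance_eq_integral hL.1.aemeasurable, hE]
  have h1 := integral_mono his hiu up
  have h2 := integral_mono (hiu.sub hiv) his lo
  have h3 : ∫ w, ((Q w + s ^ 2) / (2 * s) - (Q w - s ^ 2) ^ 2 / (2 * s ^ 3)) ∂P
      = s - Var[Q; P] / (2 * s ^ 3) := by
    rw [integral_sub hiu hiv, eu, ev]
  have h2' := h3.symm.trans_le h2
  rw [eu] at h1
  rw [abs_le]
  have : 0 ≤ Var[Q; P] / (2 * s ^ 3) := div_nonneg (variance_nonneg _ _) (by positivity)
  constructor <;> linarith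

/-- For a `k × n` matrix `S` of i.i.d. Gaussian entries of mean `0` and variance
`1/k`, for every `x ∈ ℝⁿ`, `|E‖Sx‖ − ‖x‖| ≤ (C/k)·‖x‖` for an absolute constant `C`, where the
norms are Euclidean. -/
theorem stmt_9 :
    ∃ C : ℝ, ∀ (k n : ℕ), 1 ≤ k → 1 ≤ n → ∀ x : Fin n → ℝ,
      |(∫ S : Fin k → Fin n → ℝ,
            Real.sqrt (∑ i, (∑ j, S i j * x j) ^ 2)
          ∂(Measure.pi fun _ : Fin k =>
              Measure.pi fun _ : Fin n => gaussianReal 0 ((k : ℝ≥0)⁻¹)))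
          - Real.sqrt (∑ j, (x j) ^ 2)|
        ≤ (C / k) * Real.sqrt (∑ j, (x j) ^ 2) := by
  refine ⟨Var[fun z : ℝ => z ^ 2; gaussianReal 0 1] / 2, ?_⟩
  intro k n hk hn x
  have hk0 : (0 : ℝ) < k := by exact_mod_cast hk
  have hx0 : 0 ≤ ∑ j, x j ^ 2 := Finset.sum_nonneg fun j _ => sq_nonneg _
  rcases hx0.eq_or_lt with h0 | hpos
  · have hx : ∀ j, x j = 0 := by
      intro j
      have := (Finset.sum_eq_zero_iff_of_nonneg (fun j _ => sq_nonneg (x j))).1 h0.symm j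
        (Finset.mem_univ j)
      simpa using this
    simp [hx]
  set s := Real.sqrt (∑ j, x j ^ 2) with hs
  have hspos : 0 < s := Real.sqrt_pos.2 hpos
  have hs2 : s ^ 2 = ∑ j, x j ^ 2 := Real.sq_sqrt hx0
  obtain ⟨c, hc⟩ : ∃ c : ℝ, c ^ 2 = s ^ 2 / k :=
    ⟨Real.sqrt (s ^ 2 / k), Real.sq_sqrt (by positivity)⟩
  set ν := Measure.pi fun _ : Fin n => gaussianReal 0 ((k : ℝ≥0)⁻¹) with hν
  have hlaw := law_aux n ((k : ℝ≥0)⁻¹) x c (by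
    rw [hc, hs2]; push_cast; ring)
  rw [← hν] at hlaw
  have hm : Measurable (fun w : Fin n → ℝ => ∑ j, w j * x j) := by fun_prop
  -- one-row facts
  have hz2 : MemLp (fun z : ℝ => z ^ 2) 2 (gaussianReal 0 1) := by
    have h4 : MemLp (id : ℝ → ℝ) 4 (gaussianReal 0 1) := memLp_id_gaussianReal' 4 (by simp)
    rw [memLp_two_iff_integrable_sq (by fun_prop)]
    have := h4.integrable_norm_pow (p := 4) (by norm_num)
    refine this.congr (.of_forall fun z => ?_)
    simp only [id, Real.norm_eq_abs]
    rw [show (4 : ℕ) = 2 * 2 from rfl, pow_mul, sq_abs]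
  have hcz : MemLp (fun z : ℝ => (c * z) ^ 2) 2 (gaussianReal 0 1) := by
    simp_rw [mul_pow]
    exact hz2.const_mul _
  have hrL : MemLp (fun w : Fin n → ℝ => (∑ j, w j * x j) ^ 2) 2 ν := by
    have h : MemLp (fun y : ℝ => y ^ 2) 2 (ν.map (fun w => ∑ j, w j * x j)) := by
      rw [hlaw, memLp_map_measure_iff (by fun_prop) (by fun_prop)]
      exact hcz
    exact (memLp_map_measure_iff (by fun_prop) hm.aemeasurable).1 h
  have hz : ∫ z : ℝ, z ^ 2 ∂(gaussianReal 0 1) = 1 := by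
    have := variance_eq_integral (μ := gaussianReal 0 1) (X := fun z : ℝ => z) (by fun_prop)
    rw [variance_fun_id_gaussianReal, integral_id_gaussianReal] at this
    simpa using this.symm
  have hrE : ∫ w, (∑ j, w j * x j) ^ 2 ∂ν = s ^ 2 / k := by
    rw [← integral_map (φ := fun w : Fin n → ℝ => ∑ j, w j * x j) (f := fun y : ℝ => y ^ 2)
      hm.aemeasurable (by fun_prop), hlaw, integral_map (by fun_prop) (by fun_prop)]
    simp_rw [mul_pow]
    rw [integral_const_mul, hz, hc, mul_one]
  have hrV : Var[fun w : Fin n → ℝ => (∑ j, w j * x j) ^ 2; ν]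
      = (s ^ 2 / k) ^ 2 * Var[fun z : ℝ => z ^ 2; gaussianReal 0 1] := by
    have h := variance_map (μ := ν) (X := fun y : ℝ => y ^ 2)
      (Y := fun w : Fin n → ℝ => ∑ j, w j * x j) (by fun_prop) hm.aemeasurable
    rw [hlaw, variance_map (by fun_prop) (by fun_prop)] at h
    simp only [Function.comp_def, mul_pow] at h
    rw [variance_const_mul, hc] at h
    exact h.symm
  -- the quadratic form
  have hQL : MemLp (fun S : Fin k → Fin n → ℝ => ∑ i, (∑ j, S i j * x j) ^ 2) 2
      (Measure.pi fun _ : Fin k => ν) := by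
    refine memLp_finsetSum _ fun i _ => ?_
    exact hrL.comp_measurePreserving (measurePreserving_eval (fun _ : Fin k => ν) i)
  have hQE : ∫ S : Fin k → Fin n → ℝ, ∑ i, (∑ j, S i j * x j) ^ 2 ∂(Measure.pi fun _ : Fin k => ν)
      = s ^ 2 := by
    rw [integral_finsetSum]
    · have : ∀ i : Fin k, ∫ S : Fin k → Fin n → ℝ, (∑ j, S i j * x j) ^ 2
          ∂(Measure.pi fun _ : Fin k => ν) = s ^ 2 / k := by
        intro i
        rw [integral_comp_eval (μ := fun _ : Fin k => ν)
          (f := fun w : Fin n → ℝ => (∑ j, w j * x j) ^ 2) hrL.1, hrE]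
      simp only [this]
      simp
      field_simp
    · intro i _
      exact integrable_comp_eval (μ := fun _ : Fin k => ν)
        (f := fun w : Fin n → ℝ => (∑ j, w j * x j) ^ 2) (hrL.integrable (by norm_num))
  have hQV : Var[fun S : Fin k → Fin n → ℝ => ∑ i, (∑ j, S i j * x j) ^ 2;
      Measure.pi fun _ : Fin k => ν]
      = k * ((s ^ 2 / k) ^ 2 * Var[fun z : ℝ => z ^ 2; gaussianReal 0 1]) := by
    have h := variance_sum_pi (μ := fun _ : Fin k => ν)
      (X := fun _ (w : Fin n → ℝ) => (∑ j, w j * x j) ^ 2) fun _ => hrL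
    have e : (∑ i, fun S : Fin k → Fin n → ℝ => (∑ j, S i j * x j) ^ 2)
        = fun S => ∑ i, (∑ j, S i j * x j) ^ 2 := by
      ext; simp
    rw [e] at h
    rw [h, hrV]
    simp
  have := sqrt_aux (Measure.pi fun _ : Fin k => ν) _
    (fun S => Finset.sum_nonneg fun i _ => sq_nonneg _) hQL s hspos hQE
  refine this.trans (le_of_eq ?_)
  rw [hQV]
  field_simp
end

section
/- There is an absolute constant C such that for every integer n ≥ 1, every ε ∈ (0,1), and every integer τ with 1 ≤ τ ≤ n, there exists a finite multiset 𝒮 of τ-element subsets of {1,…,n} with |𝒮| ≤ ⌈C·n/ε²⌉ such that for every set Q ⊆ {1,…,n} with |Q| ≥ ε·n, the fraction of members T ∈ 𝒮 with T ∩ Q ≠ ∅ differs by at most ε from the probability that a uniformly random τ-element subset of {1,…,n} intersects Q. -/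
lemma mgf_bound_aux {Ω : Type} [Fintype Ω] (y : Ω → ℝ) (hy : ∀ x, |y x| ≤ 1)
    (h0 : ∑ x, y x = 0) (t : ℝ) (ht0 : 0 ≤ t) (ht : t ≤ 1) :
    ∑ x, Real.exp (t * y x) ≤ Fintype.card Ω * Real.exp (t ^ 2) := by
  have h1 : ∀ x, Real.exp (t * y x) ≤ Real.exp (t ^ 2) + t * y x := by
    intro x
    have hx : |t * y x| ≤ 1 := by
      rw [abs_mul, abs_of_nonneg ht0]
      exact mul_le_one₀ ht (abs_nonneg _) (hy x)
    have h2 := (abs_le.mp (Real.abs_exp_sub_one_sub_id_le hx)).2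
    have h3 := Real.add_one_le_exp (t ^ 2)
    have h4 : (t * y x) ^ 2 ≤ t ^ 2 := by
      rw [mul_pow]
      have : y x ^ 2 ≤ 1 := (sq_le_one_iff_abs_le_one _).mpr (hy x)
      nlinarith [sq_nonneg t]
    linarith
  calc _ ≤ ∑ x, (Real.exp (t ^ 2) + t * y x) := Finset.sum_le_sum fun x _ => h1 x
    _ = _ := by
      rw [Finset.sum_add_distrib, ← Finset.mul_sum, h0]
      simp

lemma sample_exists_aux {Ω ι : Type} [Fintype Ω] [Nonempty Ω] [Fintype ι] (f : ι → Ω → ℝ)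
    (hf : ∀ i x, |f i x| ≤ 1) (h0 : ∀ i, ∑ x, f i x = 0) (ε : ℝ) (he : 0 < ε) (he1 : ε < 1)
    (m : ℕ) (hm : (Fintype.card ι : ℝ) ≤ Real.exp (m * ε ^ 2 / 4)) :
    ∃ w : Fin m → Ω, ∀ i, ∑ j, f i (w j) ≤ m * ε := by
  have hs : ∑ w : Fin m → Ω, ∑ i, Real.exp (ε / 2 * ∑ j, f i (w j)) ≤
      ∑ w : Fin m → Ω, Real.exp (m * ε ^ 2 / 2) := by
    rw [Finset.sum_comm]
    have h1 : ∀ i, ∑ w : Fin m → Ω, Real.exp (ε / 2 * ∑ j, f i (w j)) ≤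
        (Fintype.card Ω : ℝ) ^ m * Real.exp (m * ε ^ 2 / 4) := by
      intro i
      have h2 : ∑ w : Fin m → Ω, Real.exp (ε / 2 * ∑ j, f i (w j)) =
          (∑ x, Real.exp (ε / 2 * f i x)) ^ m := by
        rw [Fintype.sum_pow]
        refine Finset.sum_congr rfl fun w _ => ?_
        rw [Finset.mul_sum, Real.exp_sum]
      rw [h2]
      calc _ ≤ (Fintype.card Ω * Real.exp ((ε / 2) ^ 2)) ^ m := by
            apply pow_le_pow_left₀ (Finset.sum_nonneg fun x _ => (Real.exp_pos _).le)
            exact mgf_bound_aux _ (hf i) (h0 i) _ (by linarith) (by linarith)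
        _ = _ := by
            rw [mul_pow, ← Real.exp_nat_mul]
            congr 2
            ring
    calc _ ≤ ∑ i : ι, (Fintype.card Ω : ℝ) ^ m * Real.exp (m * ε ^ 2 / 4) :=
          Finset.sum_le_sum fun i _ => h1 i
      _ = Fintype.card ι * ((Fintype.card Ω : ℝ) ^ m * Real.exp (m * ε ^ 2 / 4)) := by simp
      _ ≤ Real.exp (m * ε ^ 2 / 4) * ((Fintype.card Ω : ℝ) ^ m * Real.exp (m * ε ^ 2 / 4)) := by
          gcongr
      _ = (Fintype.card Ω : ℝ) ^ m * Real.exp (m * ε ^ 2 / 2) := by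
          rw [show (m : ℝ) * ε ^ 2 / 2 = m * ε ^ 2 / 4 + m * ε ^ 2 / 4 by ring, Real.exp_add]
          ring
      _ = _ := by simp
  obtain ⟨w, -, hw⟩ := Finset.exists_le_of_sum_le Finset.univ_nonempty hs
  refine ⟨w, fun i => ?_⟩
  have h3 : Real.exp (ε / 2 * ∑ j, f i (w j)) ≤ Real.exp (m * ε ^ 2 / 2) :=
    le_trans (Finset.single_le_sum (f := fun i => Real.exp (ε / 2 * ∑ j, f i (w j)))
      (fun i _ => (Real.exp_pos _).le) (Finset.mem_univ i)) hw
  rw [Real.exp_le_exp] at h3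
  have h4 : ε / 2 * ∑ j, f i (w j) ≤ ε / 2 * (m * ε) := by linarith
  exact le_of_mul_le_mul_left h4 (by linarith)

/-- Sparsifying the Sherali–Adams LP: there is an absolute constant `C` such that
for every `n ≥ 1`, `ε ∈ (0,1)` and `1 ≤ τ ≤ n` there is a nonempty multiset `𝒮` of `τ`-element
subsets of `{1,…,n}` of size at most `⌈C·n/ε²⌉` such that for every `Q ⊆ {1,…,n}` with
`|Q| ≥ ε·n`, the fraction of members of `𝒮` intersecting `Q` is within `ε` of the probability
that a uniformly random `τ`-element subset intersects `Q`. -/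
theorem stmt_18 :
    ∃ C : ℝ, 0 < C ∧
      ∀ (n : ℕ), 1 ≤ n → ∀ ε : ℝ, 0 < ε → ε < 1 → ∀ τ : ℕ, 1 ≤ τ → τ ≤ n →
        ∃ 𝒮 : Multiset (Finset (Fin n)),
          0 < Multiset.card 𝒮 ∧
          Multiset.card 𝒮 ≤ ⌈C * n / ε ^ 2⌉₊ ∧
          (∀ T ∈ 𝒮, T.card = τ) ∧
          ∀ Q : Finset (Fin n), ε * n ≤ Q.card →
            |((𝒮.filter fun T => (T ∩ Q).Nonempty).card : ℝ) / (Multiset.card 𝒮 : ℝ) -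
                (((Finset.powersetCard τ (Finset.univ : Finset (Fin n))).filter
                    (fun T => (T ∩ Q).Nonempty)).card : ℝ) / (n.choose τ : ℝ)|
              ≤ ε := by
  refine ⟨8, by norm_num, ?_⟩
  intro n hn ε he he1 τ hτ1 hτ
  set P := Finset.powersetCard τ (Finset.univ : Finset (Fin n)) with hP
  have hPc : P.card = n.choose τ := by simp [hP]
  have hc : 0 < n.choose τ := Nat.choose_pos hτ
  have hcR : (0 : ℝ) < n.choose τ := by exact_mod_cast hc
  have hne : Nonempty P := (Finset.card_pos.mp (hPc ▸ hc)).to_subtype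
  set m := ⌈8 * (n : ℝ) / ε ^ 2⌉₊ with hmdef
  have hnR : (1 : ℝ) ≤ n := by exact_mod_cast hn
  have hmle : 8 * (n : ℝ) / ε ^ 2 ≤ m := Nat.le_ceil _
  have hm8 : 8 * (n : ℝ) ≤ m * ε ^ 2 := (div_le_iff₀ (by positivity)).mp hmle
  have hm0 : 0 < m := Nat.ceil_pos.mpr (by positivity)
  have hmR : (0 : ℝ) < m := by exact_mod_cast hm0
  let p : Finset (Fin n) → ℝ := fun Q =>
    ((P.filter (fun T => (T ∩ Q).Nonempty)).card : ℝ) / (n.choose τ : ℝ)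
  have hp0 : ∀ Q, 0 ≤ p Q := fun Q => by positivity
  have hp1 : ∀ Q, p Q ≤ 1 := fun Q => by
    refine (div_le_one hcR).mpr ?_
    rw [← hPc]
    exact_mod_cast Finset.card_filter_le _ _
  let g : Finset (Fin n) → P → ℝ := fun Q T => (if (T.1 ∩ Q).Nonempty then (1 : ℝ) else 0) - p Q
  have hg1 : ∀ Q T, |g Q T| ≤ 1 := by
    intro Q T
    have := hp0 Q
    have := hp1 Q
    simp only [g]
    rw [abs_le]
    split_ifs <;> constructor <;> linarith
  have hg0 : ∀ Q, ∑ T, g Q T = 0 := by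
    intro Q
    simp only [g]
    rw [Finset.sum_sub_distrib,
      Finset.sum_coe_sort P (fun T => if (T ∩ Q).Nonempty then (1 : ℝ) else 0),
      Finset.sum_boole]
    simp only [Finset.sum_const, Finset.card_univ, Fintype.card_coe, hPc, nsmul_eq_mul, p]
    field_simp
    ring
  obtain ⟨w, hw⟩ := sample_exists_aux (ι := Finset (Fin n) × Bool)
    (fun i T => if i.2 then g i.1 T else - g i.1 T)
    (by
      rintro ⟨Q, b⟩ T
      cases b <;> simpa using hg1 Q T)
    (by
      rintro ⟨Q, b⟩
      cases b <;> simpa using hg0 Q) ε he he1 m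
    (by
      have h2 : (2 : ℝ) ≤ Real.exp 1 := by linarith [Real.add_one_le_exp (1 : ℝ)]
      calc ((Fintype.card (Finset (Fin n) × Bool) : ℕ) : ℝ) = 2 ^ (n + 1) := by
            simp [pow_succ]
        _ ≤ Real.exp 1 ^ (n + 1) := by gcongr
        _ = Real.exp (n + 1) := by rw [← Real.exp_nat_mul]; simp
        _ ≤ _ := by
            rw [Real.exp_le_exp]
            linarith)
  have hcard : Multiset.card (Finset.univ.val.map (fun j : Fin m => (w j).1)) = m := by simp
  refine ⟨Finset.univ.val.map (fun j : Fin m => (w j).1), ?_, ?_, ?_, ?_⟩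
  · rw [hcard]; exact hm0
  · rw [hcard]
  · intro T hT
    obtain ⟨j, -, rfl⟩ := Multiset.mem_map.mp hT
    exact (Finset.mem_powersetCard.mp (w j).2).2
  · intro Q _
    rw [hcard]
    have hA : (((Finset.univ.val.map (fun j : Fin m => (w j).1)).filter
        fun T => (T ∩ Q).Nonempty).card : ℝ) = ∑ j, g Q (w j) + m * p Q := by
      simp only [g]
      rw [Finset.sum_sub_distrib, Finset.sum_boole, Multiset.filter_map, Multiset.card_map]
      simp
      rfl
    rw [hA]
    have e : (∑ j, g Q (w j) + m * p Q) / m - p Q = (∑ j, g Q (w j)) / m := by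
      field_simp
      ring
    change |(∑ j, g Q (w j) + m * p Q) / m - p Q| ≤ ε
    rw [e, abs_div, abs_of_pos hmR, div_le_iff₀ hmR, abs_le]
    have a1 := hw (Q, true)
    have a2 := hw (Q, false)
    simp at a1 a2
    constructor <;> linarith
end
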